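/- arXiv:2507.10746 — 3 statements merged into one kernel-verified Lean document; each statement's English description precedes it below -/
import Mathlib

section
/- Let s ~ P_{n,θ*} with θ* ∈ Θ ⊆ ℝ^q and let Θ₀ ⊆ Θ. Suppose that for every θ* ∈ Θ₀ there is a random variable T_{θ*} with continuous CDF such that (τ̂(s) − τ(θ*))/σ̂(s) converges in distribution to T_{θ*}, and that the parametric-bootstrap estimator τ̂(s_b) with s_b ~ P_{n,θ̂(s)} given s is consistent. Let ξ̂_α(s) be the upper α-quantile of the conditional law of |(τ̂(s_b) − τ(θ̂(s)))/σ̂(s_b)| given s. Then the sequence of tests that rejects H₀ : θ* ∈ Θ₀ when the statistic T_n(s) := inf_{θ ∈ Θ₀} |(τ̂(s) − τ(θ))/σ̂(s)| exceeds ξ̂_α(s) is asymptotically of level α, i.e., limsup_{n→∞} P_{n,θ*}(T_n(s) > ξ̂_α(s)) ≤ α for all θ* ∈ Θ₀. -/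
open MeasureTheory Filter Topology

/-- The conditional bootstrap CDF: given the observed statistic `x`, the CDF (at `t`) of
`(τ̂(s_b) − τ(θ̂(x)))/σ̂(s_b)` where `s_b ~ P_{n, θ̂(x)}` conditionally on `s = x`. -/
noncomputable def bootCDF {p q : ℕ} (P : ℕ → (Fin q → ℝ) → Measure (Fin p → ℝ))
    (τ : (Fin q → ℝ) → ℝ) (τhat σhat : ℕ → (Fin p → ℝ) → ℝ)
    (θhat : ℕ → (Fin p → ℝ) → (Fin q → ℝ)) (n : ℕ) (x : Fin p → ℝ) (t : ℝ) : ℝ :=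
  ((P n (θhat n x)) {y | (τhat n y - τ (θhat n x)) / σhat n y ≤ t}).toReal

/-- The sampling CDF (at `t`) of `(τ̂(s) − τ(θ*))/σ̂(s)` when `s ~ P_{n,θ*}`. -/
noncomputable def sampCDF {p q : ℕ} (P : ℕ → (Fin q → ℝ) → Measure (Fin p → ℝ))
    (τ : (Fin q → ℝ) → ℝ) (τhat σhat : ℕ → (Fin p → ℝ) → ℝ)
    (θs : Fin q → ℝ) (n : ℕ) (t : ℝ) : ℝ :=
  ((P n θs) {x | (τhat n x - τ θs) / σhat n x ≤ t}).toReal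

/-- Consistency of the parametric-bootstrap estimator relative to the
Kolmogorov–Smirnov distance. -/
def PBConsistent {p q : ℕ} (P : ℕ → (Fin q → ℝ) → Measure (Fin p → ℝ))
    (τ : (Fin q → ℝ) → ℝ) (τhat σhat : ℕ → (Fin p → ℝ) → ℝ)
    (θhat : ℕ → (Fin p → ℝ) → (Fin q → ℝ)) (θs : Fin q → ℝ) : Prop :=
  ∀ ε > (0 : ℝ),
    Tendsto (fun n => ((P n θs) {x | ∃ t : ℝ,
        ε ≤ |bootCDF P τ τhat σhat θhat n x t - sampCDF P τ τhat σhat θs n t|}).toReal)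
      atTop (𝓝 0)

/-- The upper `α`-quantile `ξ̂_α(x)` of the conditional bootstrap law of
`|(τ̂(s_b) − τ(θ̂(x)))/σ̂(s_b)|` given `s = x`. -/
noncomputable def bootAbsUpperQuantile {p q : ℕ}
    (P : ℕ → (Fin q → ℝ) → Measure (Fin p → ℝ))
    (τ : (Fin q → ℝ) → ℝ) (τhat σhat : ℕ → (Fin p → ℝ) → ℝ)
    (θhat : ℕ → (Fin p → ℝ) → (Fin q → ℝ)) (n : ℕ) (x : Fin p → ℝ) (α : ℝ) : ℝ :=
  sInf {t : ℝ | 1 - α ≤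
    ((P n (θhat n x)) {y | |(τhat n y - τ (θhat n x)) / σhat n y| ≤ t}).toReal}

/-- The test statistic `T_n(x) := inf_{θ ∈ Θ₀} |(τ̂(x) − τ(θ))/σ̂(x)|`. -/
noncomputable def testStat {p q : ℕ} (Θ₀ : Set (Fin q → ℝ))
    (τ : (Fin q → ℝ) → ℝ) (τhat σhat : ℕ → (Fin p → ℝ) → ℝ)
    (n : ℕ) (x : Fin p → ℝ) : ℝ :=
  sInf {v : ℝ | ∃ θ ∈ Θ₀, v = |(τhat n x - τ θ) / σhat n x|}

lemma aux_abs_le {Ω : Type*} [MeasurableSpace Ω] (μ : Measure Ω) [IsProbabilityMeasure μ]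
    (Y : Ω → ℝ) (hY : Measurable Y) (c t : ℝ) (hc : 0 < c) (ht : t < c) :
    (μ {y | |Y y| ≤ t}).toReal ≤ (μ {y | Y y ≤ c}).toReal - (μ {y | Y y ≤ -c}).toReal := by
  have hd : Disjoint {y | |Y y| ≤ t} {y | Y y ≤ -c} := by
    rw [Set.disjoint_left]
    intro y h1 h2
    simp only [Set.mem_ofPred_eq] at h1 h2
    have := (abs_le.1 h1).1
    linarith
  have h1 : μ.real ({y | |Y y| ≤ t} ∪ {y | Y y ≤ -c}) = μ.real {y | |Y y| ≤ t} + μ.real {y | Y y ≤ -c} :=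
    measureReal_union hd (measurableSet_le hY measurable_const)
  have h2 : μ.real ({y | |Y y| ≤ t} ∪ {y | Y y ≤ -c}) ≤ μ.real {y | Y y ≤ c} := by
    refine measureReal_mono ?_
    rintro y (h | h)
    · simp only [Set.mem_ofPred_eq] at h ⊢
      have := (abs_le.1 h).2
      linarith
    · simp only [Set.mem_ofPred_eq] at h ⊢
      linarith
  simp only [Measure.real] at h1 h2
  linarith

lemma aux_lt_abs {Ω : Type*} [MeasurableSpace Ω] (μ : Measure Ω) [IsProbabilityMeasure μ]
    (Y : Ω → ℝ) (hY : Measurable Y) (c : ℝ) :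
    (μ {y | c < |Y y|}).toReal ≤ 1 - ((μ {y | Y y ≤ c}).toReal - (μ {y | Y y ≤ -c}).toReal) := by
  have h1 : μ.real {y | c < |Y y|} ≤ μ.real ({y | Y y ≤ c}ᶜ ∪ {y | Y y ≤ -c}) := by
    refine measureReal_mono ?_
    intro y h
    simp only [Set.mem_ofPred_eq, Set.mem_union, Set.mem_compl_iff, not_le] at h ⊢
    rcases lt_abs.1 h with h | h
    · exact Or.inl h
    · right; linarith
  have h2 := measureReal_union_le (μ := μ) {y | Y y ≤ c}ᶜ {y | Y y ≤ -c}
  have h3 : μ.real {y | Y y ≤ c}ᶜ = 1 - μ.real {y | Y y ≤ c} :=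
    probReal_compl_eq_one_sub (measurableSet_le hY measurable_const)
  simp only [Measure.real] at h1 h2 h3
  linarith

lemma aux_nonempty {Ω : Type*} [MeasurableSpace Ω] (μ : Measure Ω) [IsProbabilityMeasure μ]
    (Y : Ω → ℝ) (b : ℝ) (hb : b < 1) :
    {t : ℝ | b ≤ (μ {y | |Y y| ≤ t}).toReal}.Nonempty := by
  have h : Tendsto (fun t : ℝ => μ {y | |Y y| ≤ t}) atTop (𝓝 (μ (⋃ t : ℝ, {y | |Y y| ≤ t}))) :=
    tendsto_measure_iUnion_atTop (fun s t hst y hy => le_trans hy hst)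
  have hU : (⋃ t : ℝ, {y | |Y y| ≤ t}) = Set.univ := by
    ext y
    simp only [Set.mem_iUnion, Set.mem_ofPred_eq, Set.mem_univ, iff_true]
    exact ⟨_, le_rfl⟩
  rw [hU, measure_univ] at h
  have h' := (ENNReal.tendsto_toReal ENNReal.one_ne_top).comp h
  rw [ENNReal.toReal_one] at h'
  obtain ⟨t, ht⟩ := (h'.eventually (lt_mem_nhds hb)).exists
  exact ⟨t, ht.le⟩

/-- **Asymptotic level of parametric-bootstrap hypothesis tests.**
Suppose that for every `θ* ∈ Θ₀` the ratio `(τ̂(s) − τ(θ*))/σ̂(s)` converges in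
distribution to a random variable with continuous CDF, and that the parametric-bootstrap
estimator is consistent.  Then the sequence of tests rejecting `H₀ : θ* ∈ Θ₀` when
`T_n(s) := inf_{θ ∈ Θ₀} |(τ̂(s) − τ(θ))/σ̂(s)|` exceeds the bootstrap quantile
`ξ̂_α(s)` is asymptotically of level `α`:
`limsup_n P_{n,θ*}(T_n(s) > ξ̂_α(s)) ≤ α` for all `θ* ∈ Θ₀`. -/
theorem pb_hypothesis_tests_asymptotic_level {p q : ℕ}
    (Θ Θ₀ : Set (Fin q → ℝ)) (hΘ₀ : Θ₀ ⊆ Θ)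
    (P : ℕ → (Fin q → ℝ) → Measure (Fin p → ℝ))
    (hP : ∀ n θ, IsProbabilityMeasure (P n θ))
    (τ : (Fin q → ℝ) → ℝ)
    (τhat σhat : ℕ → (Fin p → ℝ) → ℝ)
    (θhat : ℕ → (Fin p → ℝ) → (Fin q → ℝ))
    (hτhat : ∀ n, Measurable (τhat n)) (hσhat : ∀ n, Measurable (σhat n))
    (hθhat : ∀ n, Measurable (θhat n))
    (hconv : ∀ θs ∈ Θ₀, ∃ F : ℝ → ℝ, Continuous F ∧ Monotone F ∧
      Tendsto F atBot (𝓝 0) ∧ Tendsto F atTop (𝓝 1) ∧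
      ∀ t, Tendsto (fun n => sampCDF P τ τhat σhat θs n t) atTop (𝓝 (F t)))
    (hPB : ∀ θs ∈ Θ₀, PBConsistent P τ τhat σhat θhat θs)
    (α : ℝ) (hα0 : 0 < α) (hα1 : α < 1) :
    ∀ θs ∈ Θ₀,
      Filter.limsup (fun n =>
        ((P n θs) {x | bootAbsUpperQuantile P τ τhat σhat θhat n x α
            < testStat Θ₀ τ τhat σhat n x}).toReal) atTop ≤ α := by
  intro θs hθs
  obtain ⟨F, hFc, hFm, hF0, hF1, hF⟩ := hconv θs hθs
  have key : ∀ δ : ℝ, 0 < δ → δ < 1 - α →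
      Filter.limsup (fun n =>
        ((P n θs) {x | bootAbsUpperQuantile P τ τhat σhat θhat n x α
            < testStat Θ₀ τ τhat σhat n x}).toReal) atTop ≤ α + 2 * δ := by
    intro δ hδ hδ1
    have hGc : Continuous (fun t => F t - F (-t)) := hFc.sub (hFc.comp continuous_neg)
    have hG1 : Tendsto (fun t => F t - F (-t)) atTop (𝓝 (1 - 0)) :=
      hF1.sub (hF0.comp tendsto_neg_atTop_atBot)
    rw [sub_zero] at hG1
    obtain ⟨M, hM, hM0⟩ := ((hG1.eventually (lt_mem_nhds (show 1 - α - δ < 1 by linarith))).and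
      (eventually_ge_atTop (0 : ℝ))).exists
    obtain ⟨c, hcm, hc⟩ := intermediate_value_Icc hM0 hGc.continuousOn
      (show 1 - α - δ ∈ Set.Icc _ _ from ⟨by simp; linarith, hM.le⟩)
    have hc0 : 0 < c := by
      rcases hcm.1.lt_or_eq with h | h
      · exact h
      · subst h
        simp at hc
        linarith
    simp only at hc
    have hε : 0 < δ / 8 := by linarith
    have e1 := (hF c).eventually (Metric.ball_mem_nhds _ hε)
    have e2 := (hF (-c)).eventually (Metric.ball_mem_nhds _ hε)
    have e3 := (hPB θs hθs (δ / 8) hε).eventually (gt_mem_nhds hε)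
    refine limsup_le_of_le (isCoboundedUnder_le_of_le atTop (x := 0)
      (fun n => ENNReal.toReal_nonneg)) ?_
    filter_upwards [e1, e2, e3] with n h1 h2 h3
    rw [Real.dist_eq, abs_lt] at h1 h2
    haveI := hP
    have hmeas : ∀ θ, Measurable (fun y => (τhat n y - τ θ) / σhat n y) := fun θ =>
      ((hτhat n).sub_const _).div (hσhat n)
    set B := {x | ∃ t : ℝ,
        δ / 8 ≤ |bootCDF P τ τhat σhat θhat n x t - sampCDF P τ τhat σhat θs n t|} with hB
    have hsub : {x | bootAbsUpperQuantile P τ τhat σhat θhat n x α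
            < testStat Θ₀ τ τhat σhat n x} ⊆
        B ∪ {x | c < |(τhat n x - τ θs) / σhat n x|} := by
      intro x hx
      by_cases hxB : x ∈ B
      · exact Or.inl hxB
      right
      simp only [hB, Set.mem_ofPred_eq, not_exists, not_le] at hxB
      have b1 := abs_lt.1 (hxB c)
      have b2 := abs_lt.1 (hxB (-c))
      have hq : c ≤ bootAbsUpperQuantile P τ τhat σhat θhat n x α := by
        refine le_csInf (aux_nonempty (P n (θhat n x)) _ _ (by linarith)) ?_
        intro t ht
        by_contra hlt
        have h5 := aux_abs_le (P n (θhat n x)) _ (hmeas (θhat n x)) c t hc0 (not_le.1 hlt)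
        have ht' : 1 - α ≤ _ := ht
        have h6 := ht'.trans h5
        simp only [bootCDF] at b1 b2
        linarith [b1.1, b1.2, b2.1, b2.2, h1.1, h1.2, h2.1, h2.2]
      have hT : testStat Θ₀ τ τhat σhat n x ≤ |(τhat n x - τ θs) / σhat n x| := by
        refine csInf_le ⟨0, ?_⟩ ⟨θs, hθs, rfl⟩
        rintro v ⟨θ, _, rfl⟩
        exact abs_nonneg _
      have hx' : bootAbsUpperQuantile P τ τhat σhat θhat n x α
            < testStat Θ₀ τ τhat σhat n x := hx
      exact lt_of_le_of_lt hq (lt_of_lt_of_le hx' hT)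
    have m1 := measureReal_mono (μ := P n θs) hsub
    have m2 := measureReal_union_le (μ := P n θs) B
      {x | c < |(τhat n x - τ θs) / σhat n x|}
    have m3 := aux_lt_abs (P n θs) _ (hmeas θs) c
    simp only [Measure.real] at m1 m2
    simp only [sampCDF] at h1 h2
    linarith [h1.1, h1.2, h2.1, h2.2]
  refine le_of_forall_pos_le_add fun ε hε => ?_
  have hp : 0 < min (ε / 2) ((1 - α) / 2) := lt_min (by linarith) (by linarith)
  have h := key _ hp (lt_of_le_of_lt (min_le_right _ _) (by linarith))
  linarith [min_le_left (ε / 2) ((1 - α) / 2)]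
end

section
/- Let g : 𝒟 → ℝ^d have ℓ₁-sensitivity Δ₁(g) := sup_{d(D,D')≤1} ‖g(D) − g(D')‖₁ < ∞, and let the Laplace mechanism release M(D) := g(D) + (ξ₁, …, ξ_d) where ξ_i are i.i.d. with density p(x) = (1/(2b))·exp(−|x|/b). If b = Δ₁(g)/ε, then M satisfies ε-differential privacy: for all datasets D, D' with Hamming distance at most 1 and all measurable S ⊆ ℝ^d, P(M(D) ∈ S) ≤ exp(ε)·P(M(D') ∈ S). -/
open MeasureTheory

/-- The law of the Laplace mechanism `M(D) = g(D) + (ξ₁, …, ξ_d)`, `ξ_i` i.i.d. with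
density `(1/(2b))·exp(−|x|/b)`: the measure on `ℝ^d` with density
`∏_{i=1}^d (1/(2b))·exp(−|y_i − g(D)_i|/b)` with respect to Lebesgue measure. -/
noncomputable def laplaceMechanism {d : ℕ} (b : ℝ) (c : Fin d → ℝ) :
    Measure (Fin d → ℝ) :=
  volume.withDensity fun y : Fin d → ℝ =>
    ENNReal.ofReal (∏ i, (1 / (2 * b)) * Real.exp (-|y i - c i| / b))

/-- **The Laplace mechanism is `ε`-differentially private.**
Let `g : 𝒟 → ℝ^d` have ℓ₁-sensitivity bounded by `Δ₁ < ∞`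
(`∑ i, |g(D)_i − g(D')_i| ≤ Δ₁` whenever `D, D'` differ in at most one entry),
and let the Laplace mechanism release `M(D) := g(D) + (ξ₁, …, ξ_d)` where the `ξ_i` are
i.i.d. with density `p(x) = (1/(2b))·exp(−|x|/b)`.  If `b = Δ₁(g)/ε`, then `M` satisfies
`ε`-DP: for all datasets `D, D'` with Hamming distance at most `1` and all measurable
`S ⊆ ℝ^d`, `P(M(D) ∈ S) ≤ exp(ε)·P(M(D') ∈ S)`. -/
theorem laplace_mechanism_is_DP {X : Type*} [DecidableEq X] {n d : ℕ}
    (g : (Fin n → X) → (Fin d → ℝ)) (Δ₁ ε b : ℝ) (hΔ : 0 < Δ₁) (hε : 0 < ε)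
    (hsens : ∀ D D' : Fin n → X, hammingDist D D' ≤ 1 → ∑ i, |g D i - g D' i| ≤ Δ₁)
    (hb : b = Δ₁ / ε) :
    ∀ D D' : Fin n → X, hammingDist D D' ≤ 1 →
      ∀ S : Set (Fin d → ℝ), MeasurableSet S →
        laplaceMechanism b (g D) S ≤
          ENNReal.ofReal (Real.exp ε) * laplaceMechanism b (g D') S := by
  intro D D' hD S hS
  have hbpos : 0 < b := by rw [hb]; positivity
  have hbε : Δ₁ = ε * b := by rw [hb]; field_simp
  unfold laplaceMechanism
  rw [withDensity_apply _ hS, withDensity_apply _ hS,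
    ← lintegral_const_mul' _ _ ENNReal.ofReal_ne_top]
  refine lintegral_mono fun y => ?_
  rw [← ENNReal.ofReal_mul (Real.exp_pos ε).le]
  apply ENNReal.ofReal_le_ofReal
  rw [Finset.prod_mul_distrib, Finset.prod_mul_distrib, ← Real.exp_sum, ← Real.exp_sum,
    mul_left_comm, ← Real.exp_add]
  have hc : 0 ≤ ∏ _i : Fin d, (1 / (2 * b)) := Finset.prod_nonneg fun _ _ => by positivity
  refine mul_le_mul_of_nonneg_left (Real.exp_le_exp.mpr ?_) hc
  rw [← Finset.sum_div, ← Finset.sum_div, div_le_iff₀ hbpos, add_mul,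
    div_mul_cancel₀ _ hbpos.ne', ← hbε]
  have h1 : ∑ i, (-|y i - g D i|) ≤ ∑ i, (|g D i - g D' i| + -|y i - g D' i|) := by
    refine Finset.sum_le_sum fun i _ => ?_
    have := abs_sub_le (y i) (g D i) (g D' i)
    linarith
  rw [Finset.sum_add_distrib] at h1
  have h2 := hsens D D' hD
  linarith
end

section
/- Suppose g_n : ℝ^q → ℝ is a sequence of functions such that g_n(h_n) → 0 for every deterministic sequence h_n with h_n = O(1) (i.e., every bounded sequence). Then for every sequence of random vectors ĥ_n that is bounded in probability (ĥ_n = O_P(1), meaning for every δ > 0 there is M with sup_n P(‖ĥ_n‖ > M) ≤ δ), one has g_n(ĥ_n) → 0 in probability. -/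
open MeasureTheory Filter Topology

/-- **Lemma (Ferrando et al., Lemma 3).**
Suppose `g_n : ℝ^q → ℝ` is a sequence of (measurable) functions such that `g_n(h_n) → 0`
for every deterministic bounded sequence `h_n = O(1)`.  Then for every sequence of random
vectors `ĥ_n` that is bounded in probability (`ĥ_n = O_P(1)`: for every `δ > 0` there is
`M` with `sup_n P(‖ĥ_n‖ > M) ≤ δ`), one has `g_n(ĥ_n) → 0` in probability. -/
theorem tendsto_in_probability_of_tendsto_of_bounded {q : ℕ} {Ω : Type*}
    [MeasurableSpace Ω] (P : Measure Ω) [IsProbabilityMeasure P]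
    (g : ℕ → (Fin q → ℝ) → ℝ) (hg_meas : ∀ n, Measurable (g n))
    (hg : ∀ h : ℕ → (Fin q → ℝ), (∃ M : ℝ, ∀ n, ‖h n‖ ≤ M) →
      Tendsto (fun n => g n (h n)) atTop (𝓝 0))
    (hHat : ℕ → Ω → (Fin q → ℝ)) (hHat_meas : ∀ n, Measurable (hHat n))
    (hbound : ∀ δ > (0 : ℝ), ∃ M : ℝ, ∀ n, (P {ω | M < ‖hHat n ω‖}).toReal ≤ δ) :
    ∀ ε > (0 : ℝ),
      Tendsto (fun n => (P {ω | ε ≤ |g n (hHat n ω)|}).toReal) atTop (𝓝 0) := by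
  intro ε hε
  rw [Metric.tendsto_atTop]
  intro δ hδ
  obtain ⟨M, hM⟩ := hbound (δ / 2) (by linarith)
  have key : ∀ n, ∃ x : Fin q → ℝ, ‖x‖ ≤ max M 0 ∧
      ((∃ y : Fin q → ℝ, ‖y‖ ≤ M ∧ ε ≤ |g n y|) → ε ≤ |g n x|) := by
    intro n
    by_cases hy : ∃ y : Fin q → ℝ, ‖y‖ ≤ M ∧ ε ≤ |g n y|
    · obtain ⟨y, hy1, hy2⟩ := hy
      exact ⟨y, hy1.trans (le_max_left _ _), fun _ => hy2⟩
    · exact ⟨0, by simp, fun h => absurd h hy⟩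
  choose h hb hh using key
  obtain ⟨N, hN⟩ := Metric.tendsto_atTop.1 (hg h ⟨_, hb⟩) ε hε
  refine ⟨N, fun n hn => ?_⟩
  have h1 := hN n hn
  rw [Real.dist_eq, sub_zero] at h1
  have hsub : {ω | ε ≤ |g n (hHat n ω)|} ⊆ {ω | M < ‖hHat n ω‖} := by
    intro ω hω
    by_contra hlt
    exact absurd (hh n ⟨hHat n ω, not_lt.1 hlt, hω⟩) (not_le.2 h1)
  have h2 : (P {ω | ε ≤ |g n (hHat n ω)|}).toReal ≤ (P {ω | M < ‖hHat n ω‖}).toReal :=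
    ENNReal.toReal_mono (measure_ne_top _ _) (measure_mono hsub)
  rw [Real.dist_eq, sub_zero, abs_of_nonneg ENNReal.toReal_nonneg]
  linarith [hM n]
end
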